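/- For all natural numbers n ≥ 1 and real parameters a, b, x (with nonzero denominators), the Jacobi polynomials satisfy P_n^{(a+1,b−1)}(x) = (1/(n+1))·(P_{n+1}^{(a,b)})'(x) + (4(a+1+n)/((2n+2+a+b)(2n+a+b)))·(P_n^{(a,b)})'(x) + (4(a+1+n)(a+n)n/((2n+a+b−1)(2n+a+b+1)(2n+a+b)²))·(P_{n-1}^{(a,b)})'(x). -/

import Mathlib

/-- Rising factorial `(a)_k = a(a+1)⋯(a+k-1)`. -/
noncomputable def rf (a : ℝ) (k : ℕ) : ℝ := ∏ j ∈ Finset.range k, (a + j)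

/-- Monic Jacobi polynomials
`P_n^{(a,b)}(x) = ((a+1)_n 2^n / (n+a+b+1)_n) ∑_{k=0}^n
  ((-n)_k (n+a+b+1)_k / ((a+1)_k k!)) ((1-x)/2)^k`. -/
noncomputable def jacobi (a b : ℝ) (n : ℕ) (x : ℝ) : ℝ :=
  rf (a + 1) n * 2 ^ n / rf ((n : ℝ) + a + b + 1) n *
    ∑ k ∈ Finset.range (n + 1),
      rf (-(n : ℝ)) k * rf ((n : ℝ) + a + b + 1) k / (rf (a + 1) k * (k.factorial : ℝ)) *
        ((1 - x) / 2) ^ k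

/-- Derivative of the monic Jacobi polynomial with respect to `x`. -/
noncomputable def jacobiDeriv (a b : ℝ) (n : ℕ) (x : ℝ) : ℝ := deriv (jacobi a b n) x

theorem rf_succ (a : ℝ) (k : ℕ) : rf a (k + 1) = rf a k * (a + k) :=
  Finset.prod_range_succ _ _

theorem rf_succ_left (a : ℝ) (k : ℕ) : rf a (k + 1) = a * rf (a + 1) k := by
  unfold rf
  rw [Finset.prod_range_succ', mul_comm]
  push_cast
  simp only [add_zero, add_comm, add_left_comm]

theorem rf_neg_natCast_eq_zero {m k : ℕ} (h : m < k) : rf (-(m : ℝ)) k = 0 :=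
  Finset.prod_eq_zero (Finset.mem_range.mpr h) (neg_add_cancel _)

/-- The derivative of a Jacobi polynomial as a sum whose number of terms may exceed the degree. -/
theorem jacobiDeriv_eq_sum (a b x : ℝ) {m K : ℕ} (h : m ≤ K) :
    jacobiDeriv a b m x = ∑ k ∈ Finset.range K,
      rf (a + 1) m * 2 ^ m / rf ((m : ℝ) + a + b + 1) m *
        (rf (-(m : ℝ)) (k + 1) * rf ((m : ℝ) + a + b + 1) (k + 1) /
          (rf (a + 1) (k + 1) * (k.factorial : ℝ)) * (-1 / 2) * ((1 - x) / 2) ^ k) := by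
  have hd : HasDerivAt (fun y : ℝ => (1 - y) / 2) (-1 / 2) x :=
    ((hasDerivAt_id x).const_sub 1).div_const 2
  have hs : HasDerivAt (jacobi a b m) _ x :=
    (HasDerivAt.fun_sum fun k (_ : k ∈ Finset.range (m + 1)) =>
      (hd.fun_pow k).const_mul (rf (-(m : ℝ)) k * rf ((m : ℝ) + a + b + 1) k /
        (rf (a + 1) k * (k.factorial : ℝ)))).const_mul
          (rf (a + 1) m * 2 ^ m / rf ((m : ℝ) + a + b + 1) m)
  rw [jacobiDeriv, hs.deriv, Finset.sum_range_succ', ← Finset.mul_sum]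
  simp only [Nat.cast_zero, zero_mul, mul_zero, add_zero]
  congr 1
  rw [← Finset.sum_subset (Finset.range_mono h)]
  · refine Finset.sum_congr rfl fun k _ => ?_
    have hk : ((k : ℝ) + 1) ≠ 0 := by positivity
    rw [Nat.factorial_succ, Nat.add_sub_cancel]
    push_cast
    rw [mul_left_comm (rf (a + 1) (k + 1)), div_mul_eq_div_div_swap]
    field_simp
  · intro k _ hk
    rw [rf_neg_natCast_eq_zero (by simpa [Nat.lt_succ_iff] using hk)]
    simp

theorem jacobi_parameter_shift_ab (n : ℕ) (hn : 1 ≤ n) (a b x : ℝ)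
    (hpoch1 : ∀ k ≤ n + 1, rf (a + 1) k ≠ 0)
    (hpoch1' : ∀ k ≤ n, rf (a + 2) k ≠ 0)
    (hpoch2 : ∀ m ≤ n + 1, rf ((m : ℝ) + a + b + 1) m ≠ 0)
    (h1 : 2 * (n : ℝ) + a + b ≠ 0) (h2 : 2 * (n : ℝ) + a + b + 1 ≠ 0)
    (h3 : 2 * (n : ℝ) + a + b - 1 ≠ 0) (h4 : 2 * (n : ℝ) + 2 + a + b ≠ 0) :
    jacobi (a + 1) (b - 1) n x =
      (1 / ((n : ℝ) + 1)) * jacobiDeriv a b (n + 1) x +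
        (4 * (a + 1 + n) / ((2 * n + 2 + a + b) * (2 * n + a + b))) *
          jacobiDeriv a b n x +
        (4 * (a + 1 + n) * (a + n) * n /
            ((2 * n + a + b - 1) * (2 * n + a + b + 1) * (2 * n + a + b) ^ 2)) *
          jacobiDeriv a b (n - 1) x := by
  obtain ⟨N, rfl⟩ : ∃ N, n = N + 1 := ⟨n - 1, by omega⟩
  rw [jacobiDeriv_eq_sum a b x (le_refl (N + 1 + 1)), jacobiDeriv_eq_sum a b x (Nat.le_succ (N + 1)),
    jacobiDeriv_eq_sum a b x (show N + 1 - 1 ≤ N + 1 + 1 by omega), jacobi, Finset.mul_sum,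
    Finset.mul_sum, Finset.mul_sum, Finset.mul_sum, ← Finset.sum_add_distrib,
    ← Finset.sum_add_distrib]
  refine Finset.sum_congr rfl fun k hk => ?_
  have ha : a + 1 ≠ 0 := fun h => hpoch1 1 (by omega) (by simp [rf, h])
  have hQ : rf (a + 2) k ≠ 0 := hpoch1' k (by simpa [Nat.lt_succ_iff] using hk)
  have hD := hpoch2 (N + 1) (by omega)
  have hF := hpoch2 N (by omega)
  have hk0 : (k.factorial : ℝ) ≠ 0 := by positivity
  have hN : (N : ℝ) + 1 ≠ 0 := by positivity
  simp only [Nat.add_sub_cancel, pow_succ]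
  push_cast at *
  obtain ⟨s, hs⟩ : ∃ s, s = a + b := ⟨_, rfl⟩
  obtain rfl : b = s - a := by linarith
  have e0 : (N : ℝ) + 1 + (a + 1) + (s - a - 1) + 1 = N + s + 2 := by ring
  have e1 : (N : ℝ) + 1 + a + (s - a) + 1 = N + s + 2 := by ring
  have e2 : (N : ℝ) + 1 + 1 + a + (s - a) + 1 = N + s + 3 := by ring
  have e3 : (N : ℝ) + a + (s - a) + 1 = N + s + 1 := by ring
  have e4 : a + 1 + 1 = a + 2 := by ring
  have e5 : (N : ℝ) + s + 2 + 1 = N + s + 3 := by ring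
  have e6 : (N : ℝ) + s + 1 + 1 = N + s + 2 := by ring
  have e7 : -((N : ℝ) + 1 + 1) + 1 = -(N + 1) := by ring
  have e8 : -((N : ℝ) + 1) + 1 = -N := by ring
  rw [e1] at hD
  rw [e3] at hF
  rw [e0, e1, e2, e3, e4]
  have hs2 : (N : ℝ) + s + 2 ≠ 0 := fun h => hD (by rw [rf_succ_left, h, zero_mul])
  have f1 : rf (a + 2) (N + 1) = rf (a + 1) N * (a + 1 + N) * (a + 2 + N) / (a + 1) := by
    have h := rf_succ_left (a + 1) (N + 1)
    rw [e4, rf_succ, rf_succ] at h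
    rw [eq_div_iff ha, mul_comm, ← h]
    push_cast
    ring
  have f2 : rf (a + 1) (k + 1) = (a + 1) * rf (a + 2) k := by rw [rf_succ_left, e4]
  have f3 : rf (-((N : ℝ) + 1 + 1)) (k + 1) = -(N + 1 + 1) * rf (-((N : ℝ) + 1)) k := by
    rw [rf_succ_left, e7]
  have f4 : rf (-(N : ℝ)) (k + 1) =
      rf (-((N : ℝ) + 1)) k * (-(N + 1) + k) * (-N + k) / (-(N + 1)) := by
    have h := rf_succ_left (-((N : ℝ) + 1)) (k + 1)
    rw [e8, rf_succ, rf_succ] at h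
    rw [eq_div_iff (neg_ne_zero.mpr hN), mul_comm, ← h]
    push_cast
    ring
  have f5 : rf ((N : ℝ) + s + 3) (k + 1) =
      rf ((N : ℝ) + s + 2) k * (N + s + 2 + k) * (N + s + 3 + k) / (N + s + 2) := by
    have h := rf_succ_left ((N : ℝ) + s + 2) (k + 1)
    rw [e5, rf_succ, rf_succ] at h
    rw [eq_div_iff hs2, mul_comm, ← h]
    push_cast
    ring
  have f6 : rf ((N : ℝ) + s + 1) (k + 1) = (N + s + 1) * rf ((N : ℝ) + s + 2) k := by
    rw [rf_succ_left, e6]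
  have hDF : rf ((N : ℝ) + s + 2) (N + 1) * (N + s + 1) =
      rf ((N : ℝ) + s + 1) N * (2 * N + s + 1) * (2 * N + s + 2) := by
    have h := rf_succ_left ((N : ℝ) + s + 1) (N + 1)
    rw [e6, rf_succ, rf_succ] at h
    push_cast at h
    linear_combination -h
  have hED : rf ((N : ℝ) + s + 3) (N + 2) =
      rf ((N : ℝ) + s + 2) (N + 1) * (2 * N + s + 3) * (2 * N + s + 4) / (N + s + 2) := by
    have h := rf_succ_left ((N : ℝ) + s + 2) (N + 2)
    rw [e5, rf_succ, rf_succ _ (N + 1)] at h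
    push_cast at h
    rw [eq_div_iff hs2]
    linear_combination -h
  have g1 : (N : ℝ) * 2 + s + 1 ≠ 0 := fun h => h3 (by linear_combination h)
  have g2 : (N : ℝ) * 2 + s + 2 ≠ 0 := fun h => h1 (by linear_combination h)
  have g3 : (N : ℝ) * 2 + s + 3 ≠ 0 := fun h => h2 (by linear_combination h)
  have g4 : (N : ℝ) * 2 + s + 4 ≠ 0 := fun h => h4 (by linear_combination h)
  have hs1 : (N : ℝ) + s + 1 ≠ 0 := fun h => by
    rw [h, mul_zero, mul_comm 2 (N : ℝ)] at hDF
    exact mul_ne_zero (mul_ne_zero (by simpa [h] using hF) g1) g2 hDF.symm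
  have hDF' : rf ((N : ℝ) + s + 1) N =
      rf ((N : ℝ) + s + 2) (N + 1) * (N + s + 1) / ((2 * N + s + 1) * (2 * N + s + 2)) := by
    rw [hDF]
    field_simp
  rw [f1, f3, f4, f5, f6, f2, hED, hDF', rf_succ (a + 1) (N + 1), rf_succ (a + 1) N,
    rf_succ (-((N : ℝ) + 1)) k, rf_succ ((N : ℝ) + s + 2) k]
  push_cast
  have i1 : 2 * ((N : ℝ) + 1) + 2 + a + (s - a) = 2 * N + s + 4 := by ring
  have i2 : 2 * ((N : ℝ) + 1) + a + (s - a) = 2 * N + s + 2 := by ring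
  rw [i1, i2, show 2 * (N : ℝ) + s + 2 - 1 = 2 * N + s + 1 by ring,
    show 2 * (N : ℝ) + s + 2 + 1 = 2 * N + s + 3 by ring]
  generalize rf ((N : ℝ) + s + 2) (N + 1) = D at *
  generalize rf ((N : ℝ) + s + 2) k = W
  generalize rf (-((N : ℝ) + 1)) k = Z
  generalize rf (a + 2) k = Q at *
  generalize rf (a + 1) N = R
  generalize ((1 - x) / 2) ^ k = Y
  generalize (k.factorial : ℝ) = f at *
  field_simp
  ring
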